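/- arXiv:2109.01371 — 4 statements merged into one kernel-verified Lean document; each statement's English description precedes it below -/
import Mathlib

section
/- Let 𝔄 and 𝔅 be relational structures with domain {0,1,2} (each given by an arbitrary family of finitary relations on {0,1,2}) such that Pol({0,1,2}; C_3, R^=_3) ⊆ Pol(𝔄) ⊆ Pol({0,1,2}; C_3, B_2) and Pol({0,1,2}; C_3, R^=_3) ⊆ Pol(𝔅) ⊆ Pol({0,1,2}; C_3, B_2). If there exists a clone homomorphism from Pol(𝔅) to Pol(𝔄), then Pol(𝔅) ⊆ Pol(𝔄). -/
/-- The three-element domain `{0,1,2}`. -/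
abbrev D3 : Type := Fin 3

/-- `n`-ary operations on `{0,1,2}`. -/
abbrev Op (n : ℕ) : Type := (Fin n → D3) → D3

/-- An `n`-ary operation `f` preserves a `k`-ary relation `R`. -/
def Preserves {n k : ℕ} (f : Op n) (R : Set (Fin k → D3)) : Prop :=
  ∀ t : Fin n → (Fin k → D3), (∀ i, t i ∈ R) → (fun j => f fun i => t i j) ∈ R

/-- `C₃ = {(0,1),(1,2),(2,0)}`. -/
def C3rel : Set (Fin 2 → D3) :=
  { t | (t 0 = 0 ∧ t 1 = 1) ∨ (t 0 = 1 ∧ t 1 = 2) ∨ (t 0 = 2 ∧ t 1 = 0) }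

/-- `R⁼₃ = {(x,y,z) : x ∈ {0,1} ∧ (x = 0 → y = z)}`. -/
def Req3rel : Set (Fin 3 → D3) :=
  { t | (t 0 = 0 ∨ t 0 = 1) ∧ (t 0 = 0 → t 1 = t 2) }

/-- `B₂ = {(1,0),(0,1),(1,1)}`. -/
def B2rel : Set (Fin 2 → D3) :=
  { t | (t 0 = 1 ∧ t 1 = 0) ∨ (t 0 = 0 ∧ t 1 = 1) ∨ (t 0 = 1 ∧ t 1 = 1) }

/-- The polymorphism clone of a relational structure on `{0,1,2}` given by an
arbitrary family of finitary relations (each relation packaged with its arity). -/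
def Pol (A : Set (Σ k : ℕ, Set (Fin k → D3))) : ∀ n, Set (Op n) :=
  fun n => { f | ∀ R ∈ A, Preserves f R.2 }

/-- `ξ` is a clone homomorphism from `C` to `D`: it is arity-preserving, maps `C` into `D`,
fixes the projections and commutes with composition. -/
def IsCloneHom (C D : ∀ n, Set (Op n)) (ξ : ∀ n, Op n → Op n) : Prop :=
  (∀ n, ∀ f ∈ C n, ξ n f ∈ D n) ∧
  (∀ (n : ℕ) (i : Fin n), ξ n (fun x => x i) = fun x => x i) ∧
  (∀ (n m : ℕ) (f : Op n) (g : Fin n → Op m), f ∈ C n → (∀ i, g i ∈ C m) →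
    ξ m (fun x => f fun i => g i x) = fun x => ξ n f fun i => ξ m (g i) x)

def s2 (a b : D3) : D3 := if b = a + 1 then b else a

def sOp : Op 2 := fun v => s2 (v 0) (v 1)

lemma sOp_C3 : Preserves sOp C3rel := by
  intro t ht
  have h0 := ht 0
  have h1 := ht 1
  simp only [C3rel, Set.mem_setOf_eq, sOp] at *
  generalize t 0 0 = a at *
  generalize t 0 1 = b at *
  generalize t 1 0 = c at *
  generalize t 1 1 = d at *
  revert a b c d
  unfold s2
  decide

set_option maxRecDepth 100000 in
lemma sOp_R3 : Preserves sOp Req3rel := by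
  intro t ht
  have h0 := ht 0
  have h1 := ht 1
  simp only [Req3rel, Set.mem_setOf_eq, sOp] at *
  generalize t 0 0 = a at *
  generalize t 0 1 = b at *
  generalize t 1 0 = c at *
  generalize t 1 1 = d at *
  generalize t 0 2 = e at *
  generalize t 1 2 = f at *
  revert a b c d e f
  unfold s2
  decide

lemma shift_of_C3 {n : ℕ} {f : Op n} (hf : Preserves f C3rel) (x : Fin n → D3) :
    f (fun i => x i + 1) = f x + 1 := by
  have h := hf (fun i => ![x i, x i + 1]) (fun i => by
    simp only [C3rel, Set.mem_setOf_eq, Matrix.cons_val_zero, Matrix.cons_val_one]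
    generalize x i = a
    revert a; decide)
  simp only [C3rel, Set.mem_setOf_eq, Matrix.cons_val_zero, Matrix.cons_val_one] at h
  change (f x = 0 ∧ f (fun i => x i + 1) = 1) ∨ (f x = 1 ∧ f (fun i => x i + 1) = 2) ∨
    (f x = 2 ∧ f (fun i => x i + 1) = 0) at h
  generalize f (fun i => x i + 1) = b at *
  generalize f x = a at *
  revert a b; decide

lemma idem_of {n : ℕ} {f : Op n} (hf : Preserves f C3rel) (hb : Preserves f B2rel) (c : D3) :
    f (fun _ => c) = c := by
  have h1 : f (fun _ => 1) = 1 := by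
    have h := hb (fun _ => ![1, 1]) (fun i => by simp [B2rel])
    simp only [B2rel, Set.mem_setOf_eq, Matrix.cons_val_zero, Matrix.cons_val_one] at h
    generalize f (fun _ => 1) = a at *
    revert a; decide
  have h2 := shift_of_C3 hf (fun _ => 1)
  have h3 := shift_of_C3 hf (fun _ => (1 : D3) + 1)
  rw [h1] at h2
  simp only [h2] at h3
  fin_cases c
  · exact h3
  · exact h1
  · exact h2

lemma eq_sOp {f : Op 2} (hf : Preserves f C3rel) (hb : Preserves f B2rel)
    (hc : ∀ v, f ![v 1, v 0] = f v) : f = sOp := by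
  have h01 : f ![0, 1] = 1 := by
    have h := hb ![![0, 1], ![1, 0]] (fun i => by fin_cases i <;> simp [B2rel])
    have e0 : (fun i => (![![0, 1], ![1, 0]] : Fin 2 → Fin 2 → D3) i 0) = ![0, 1] := by
      ext i; fin_cases i <;> rfl
    have e1 : (fun i => (![![0, 1], ![1, 0]] : Fin 2 → Fin 2 → D3) i 1) = ![1, 0] := by
      ext i; fin_cases i <;> rfl
    simp only [B2rel, Set.mem_setOf_eq, e0, e1] at h
    have := hc ![0, 1]
    simp only [Matrix.cons_val_zero, Matrix.cons_val_one] at this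
    rw [this] at h
    clear this
    generalize f ![0, 1] = a at *
    revert a; decide
  have sh : ∀ a b : D3, f ![a + 1, b + 1] = f ![a, b] + 1 := by
    intro a b
    rw [← shift_of_C3 hf]
    congr 1; ext i; fin_cases i <;> rfl
  have sw : ∀ a b : D3, f ![b, a] = f ![a, b] := fun a b => by simpa using hc ![a, b]
  have h12 : f ![1, 2] = 2 := by have := sh 0 1; rw [h01] at this; exact this
  have h20 : f ![2, 0] = 0 := by have := sh 1 2; rw [h12] at this; exact this
  have hid : ∀ a : D3, f ![a, a] = a := fun a => by
    rw [← idem_of hf hb a]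
    congr 1
    · ext i; fin_cases i <;> simp [idem_of hf hb a]
  funext v
  obtain ⟨a, b, rfl⟩ : ∃ a b, v = ![a, b] := ⟨v 0, v 1, by ext i; fin_cases i <;> rfl⟩
  change f ![a, b] = s2 a b
  fin_cases a <;> fin_cases b
  · exact hid 0
  · exact h01
  · exact (sw 2 0).trans h20
  · exact (sw 0 1).trans h01
  · exact hid 1
  · exact h12
  · exact h20
  · exact (sw 1 2).trans h12
  · exact hid 2

/-- Equivariant ternary operations which act as the cyclic join on two-valued tuples. -/
def Good (g : D3 → D3 → D3 → D3) : Prop :=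
  (∀ a b c, g (a + 1) (b + 1) (c + 1) = g a b c + 1) ∧
  (∀ a b c, (a = b ∨ b = c ∨ a = c) → g a b c = s2 (s2 a b) c)

lemma Good.eq {g h : D3 → D3 → D3 → D3} (hg : Good g) (hh : Good h)
    (h1 : g 0 1 2 = h 0 1 2) (h2 : g 0 2 1 = h 0 2 1) : g = h := by
  have k1 : g 1 2 0 = h 1 2 0 := by
    have := hg.1 0 1 2; have := hh.1 0 1 2; simp_all
  have k2 : g 2 0 1 = h 2 0 1 := by
    have a1 := hg.1 1 2 0; have a2 := hh.1 1 2 0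
    rw [← k1, ← a1] at a2; exact a2.symm
  have k3 : g 1 0 2 = h 1 0 2 := by
    have a1 := hg.1 0 2 1; have a2 := hh.1 0 2 1
    rw [← h2, ← a1] at a2; exact a2.symm
  have k4 : g 2 1 0 = h 2 1 0 := by
    have a1 := hg.1 1 0 2; have a2 := hh.1 1 0 2
    rw [← k3, ← a1] at a2; exact a2.symm
  funext a b c
  by_cases hd : a = b ∨ b = c ∨ a = c
  · rw [hg.2 a b c hd, hh.2 a b c hd]
  · fin_cases a <;> fin_cases b <;> fin_cases c <;>
      first
      | exact absurd (by decide) hd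
      | assumption

def tX (x y z : D3) : D3 := s2 (s2 y z) x
def tY (x y z : D3) : D3 := s2 (s2 z x) y
def tZ (x y z : D3) : D3 := s2 (s2 x y) z
def tyx (x y z : D3) : D3 := s2 (tX x y z) (tY x y z)
def tzy (x y z : D3) : D3 := s2 (tY x y z) (tZ x y z)
def txz (x y z : D3) : D3 := s2 (tZ x y z) (tX x y z)
def tzx (x y z : D3) : D3 := s2 (tyx x y z) (tzy x y z)
def txy (x y z : D3) : D3 := s2 (tzy x y z) (txz x y z)
def tyz (x y z : D3) : D3 := s2 (txz x y z) (tyx x y z)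

def sel (d : D3) : D3 → D3 → D3 → D3 := ![tX, tY, tZ] d

lemma sel_012 (d : D3) : sel d 0 1 2 = d := by revert d; decide

lemma sel_good (d : D3) : Good (sel d) := by revert d; unfold Good; decide

lemma exists_term (P : (D3 → D3 → D3 → D3) → Prop)
    (hx : P (fun x _ _ => x)) (hy : P (fun _ y _ => y)) (hz : P (fun _ _ z => z))
    (hs : ∀ g h, P g → P h → P (fun x y z => s2 (g x y z) (h x y z)))
    {g : D3 → D3 → D3 → D3} (hg : Good g) : P g := by
  have pX : P tX := hs _ _ (hs _ _ hy hz) hx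
  have pY : P tY := hs _ _ (hs _ _ hz hx) hy
  have pZ : P tZ := hs _ _ (hs _ _ hx hy) hz
  have pyx : P tyx := hs _ _ pX pY
  have pzy : P tzy := hs _ _ pY pZ
  have pxz : P txz := hs _ _ pZ pX
  have pzx : P tzx := hs _ _ pyx pzy
  have pxy : P txy := hs _ _ pzy pxz
  have pyz : P tyz := hs _ _ pxz pyx
  have key : ∀ t : D3 → D3 → D3 → D3, P t → Good t →
      t 0 1 2 = g 0 1 2 → t 0 2 1 = g 0 2 1 → P g := by
    intro t ht gt h1 h2
    rw [← gt.eq hg h1 h2]; exact ht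
  have k1 := key _ pX (by unfold Good; decide)
  have k2 := key _ pY (by unfold Good; decide)
  have k3 := key _ pZ (by unfold Good; decide)
  have k4 := key _ pyx (by unfold Good; decide)
  have k5 := key _ pzy (by unfold Good; decide)
  have k6 := key _ pxz (by unfold Good; decide)
  have k7 := key _ pzx (by unfold Good; decide)
  have k8 := key _ pxy (by unfold Good; decide)
  have k9 := key _ pyz (by unfold Good; decide)
  clear key
  generalize g 0 1 2 = a at *
  generalize g 0 2 1 = b at *
  fin_cases a <;> fin_cases b <;>
    first
    | exact k1 (by decide) (by decide)
    | exact k2 (by decide) (by decide)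
    | exact k3 (by decide) (by decide)
    | exact k4 (by decide) (by decide)
    | exact k5 (by decide) (by decide)
    | exact k6 (by decide) (by decide)
    | exact k7 (by decide) (by decide)
    | exact k8 (by decide) (by decide)
    | exact k9 (by decide) (by decide)

lemma Pol_comp {A : Set (Σ k : ℕ, Set (Fin k → D3))} {n m : ℕ} {f : Op n} {g : Fin n → Op m}
    (hf : f ∈ Pol A n) (hg : ∀ i, g i ∈ Pol A m) : (fun x => f fun i => g i x) ∈ Pol A m :=
  fun R hR t ht => hf R hR (fun i j => g i fun l => t l j) (fun i => hg i R hR t ht)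

lemma Pol_proj {A : Set (Σ k : ℕ, Set (Fin k → D3))} {n : ℕ} (i : Fin n) :
    (fun x => x i) ∈ Pol A n := fun _ _ _ ht => ht i

/-- If `Pol({0,1,2}; C₃, R⁼₃) ⊆ Pol(𝔄) ⊆ Pol({0,1,2}; C₃, B₂)`, likewise for `𝔅`, and there is
a clone homomorphism from `Pol(𝔅)` to `Pol(𝔄)`, then `Pol(𝔅) ⊆ Pol(𝔄)`. -/
theorem stmt0 (A B : Set (Σ k : ℕ, Set (Fin k → D3)))
    (hA1 : ∀ n, Pol ({⟨2, C3rel⟩, ⟨3, Req3rel⟩} : Set (Σ k : ℕ, Set (Fin k → D3))) n ⊆ Pol A n)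
    (hA2 : ∀ n, Pol A n ⊆ Pol ({⟨2, C3rel⟩, ⟨2, B2rel⟩} : Set (Σ k : ℕ, Set (Fin k → D3))) n)
    (hB1 : ∀ n, Pol ({⟨2, C3rel⟩, ⟨3, Req3rel⟩} : Set (Σ k : ℕ, Set (Fin k → D3))) n ⊆ Pol B n)
    (hB2 : ∀ n, Pol B n ⊆ Pol ({⟨2, C3rel⟩, ⟨2, B2rel⟩} : Set (Σ k : ℕ, Set (Fin k → D3))) n)
    (hhom : ∃ ξ, IsCloneHom (Pol B) (Pol A) ξ) :
    ∀ n, Pol B n ⊆ Pol A n := by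
  obtain ⟨ξ, hm, hp, hc⟩ := hhom
  have sB : sOp ∈ Pol B 2 := hB1 2 (by
    intro R hR
    rcases hR with rfl | rfl
    · exact sOp_C3
    · exact sOp_R3)
  have c3A : ∀ {n} {f : Op n}, f ∈ Pol A n → Preserves f C3rel := fun h =>
    hA2 _ h ⟨2, C3rel⟩ (Or.inl rfl)
  have b2A : ∀ {n} {f : Op n}, f ∈ Pol A n → Preserves f B2rel := fun h =>
    hA2 _ h ⟨2, B2rel⟩ (Or.inr rfl)
  have c3B : ∀ {n} {f : Op n}, f ∈ Pol B n → Preserves f C3rel := fun h =>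
    hB2 _ h ⟨2, C3rel⟩ (Or.inl rfl)
  have b2B : ∀ {n} {f : Op n}, f ∈ Pol B n → Preserves f B2rel := fun h =>
    hB2 _ h ⟨2, B2rel⟩ (Or.inr rfl)
  have pair : ∀ {m : ℕ} (f : Op 2) (g : Fin 2 → Op m) (x : Fin m → D3),
      (f fun i => g i x) = f ![g 0 x, g 1 x] := by
    intro m f g x
    congr 1; ext i; fin_cases i <;> rfl
  have hξs : ξ 2 sOp = sOp := by
    refine eq_sOp (c3A (hm _ _ sB)) (b2A (hm _ _ sB)) ?_
    intro v
    have h := hc 2 2 sOp (fun i x => x (![1, 0] i)) sB (fun i => Pol_proj _)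
    have e : (fun x : Fin 2 → D3 => sOp fun i => x ((![1, 0] : Fin 2 → Fin 2) i)) = sOp := by
      funext x
      change s2 (x 1) (x 0) = s2 (x 0) (x 1)
      generalize x 0 = a
      generalize x 1 = b
      revert a b; decide
    rw [e] at h
    have h2 := congrFun h v
    simp only [hp] at h2
    rw [h2]
    congr 1; ext i; fin_cases i <;> rfl
  have W : ∀ g : D3 → D3 → D3 → D3, Good g →
      ((fun v => g (v 0) (v 1) (v 2)) ∈ Pol B 3 ∧
        ξ 3 (fun v => g (v 0) (v 1) (v 2)) = fun v => g (v 0) (v 1) (v 2)) := by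
    intro g hg
    refine exists_term (fun g => (fun v => g (v 0) (v 1) (v 2)) ∈ Pol B 3 ∧
        ξ 3 (fun v => g (v 0) (v 1) (v 2)) = fun v => g (v 0) (v 1) (v 2))
      ⟨Pol_proj 0, hp 3 0⟩ ⟨Pol_proj 1, hp 3 1⟩ ⟨Pol_proj 2, hp 3 2⟩ ?_ hg
    rintro g h ⟨g1, g2⟩ ⟨h1, h2⟩
    let G : Fin 2 → Op 3 := ![fun v => g (v 0) (v 1) (v 2), fun v => h (v 0) (v 1) (v 2)]
    have hG : ∀ i, G i ∈ Pol B 3 := by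
      intro i; fin_cases i
      · exact g1
      · exact h1
    have hG2 : ∀ i, ξ 3 (G i) = G i := by
      intro i; fin_cases i
      · exact g2
      · exact h2
    refine ⟨Pol_comp sB hG, ?_⟩
    have := hc 2 3 sOp G sB hG
    simp only [hG2, hξs] at this
    exact this
  intro n f hf
  have main : ξ n f = f := by
    funext a
    let T : Fin n → Op 3 := fun i v => sel (a i) (v 0) (v 1) (v 2)
    have hT : ∀ i, T i ∈ Pol B 3 := fun i => (W _ (sel_good (a i))).1
    have hT2 : ∀ i, ξ 3 (T i) = T i := fun i => (W _ (sel_good (a i))).2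
    have h := hc n 3 f T hf hT
    simp only [hT2] at h
    have gg : Good (fun x y z => f fun i => sel (a i) x y z) := by
      constructor
      · intro x y z
        simp only [(sel_good _).1]
        exact shift_of_C3 (c3B hf) _
      · intro x y z hd
        simp only [(sel_good _).2 x y z hd]
        exact idem_of (c3B hf) (b2B hf) _
    have h3 := (W _ gg).2
    have h4 := congrFun (h.symm.trans h3) ![0, 1, 2]
    change (ξ n f fun i => sel (a i) 0 1 2) = f fun i => sel (a i) 0 1 2 at h4
    simpa only [sel_012] using h4
  rw [← main]
  exact hm n f hf
end

section
/- Let 𝔔 = ({0,1,2}; C_3, R^=_2) and let 𝔓' be the structure with domain {0,1,2}^4 (tuples indexed x = (x_0,x_1,x_2,x_3)) and relations C_3^{P'} := {(x,y) : (x_0,y_0) ∈ C_3, x_1=y_2, x_2=y_3, x_3=y_1} and (R^=_2)^{P'} := {(x,y,z) : (x_1,x_2,x_3) ∈ B_3, (y_1,y_2,y_3) ∈ B_3, (z_1,z_2,z_3) ∈ B_3, x_3=0, x_0=x_2, (y_3,x_0) ∈ ≤_2, (z_3,x_0) ∈ ≤_2, (x_0,y_2,z_2) ∈ R^⇒_2,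 (x_0,z_2,y_2) ∈ R^⇒_2}. Then the map g with g(0)=(0,1,0,0), g(1)=(1,0,1,0), g(2)=(2,0,0,1) is a homomorphism from 𝔔 to 𝔓', and the map h with h(x_0,x_1,x_2,x_3)=0 if (x_1,x_2,x_3)∈{(1,0,0),(1,0,1)}, =1 if (x_1,x_2,x_3)∈{(0,1,0),(1,1,0)}, =2 if (x_1,x_2,x_3)∈{(0,0,1),(0,1,1)}, and =x_0 otherwise, is a homomorphism from 𝔓' to 𝔔. In particular 𝔔 and 𝔓' are homomorphically equivalent. -/
/-- `C₃ = {(0,1),(1,2),(2,0)}`. -/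
def C3P (a b : D3) : Prop := (a = 0 ∧ b = 1) ∨ (a = 1 ∧ b = 2) ∨ (a = 2 ∧ b = 0)

/-- `≤₂ = {(0,0),(0,1),(1,1)}`. -/
def le2P (a b : D3) : Prop := (a = 0 ∧ b = 0) ∨ (a = 0 ∧ b = 1) ∨ (a = 1 ∧ b = 1)

/-- `B₃ = {0,1}³ \ {(0,0,0)}`. -/
def B3P (a b c : D3) : Prop :=
  (a = 0 ∨ a = 1) ∧ (b = 0 ∨ b = 1) ∧ (c = 0 ∨ c = 1) ∧ ¬(a = 0 ∧ b = 0 ∧ c = 0)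

/-- `R⁼₂ = {(x,y,z) : x ∈ {0,1} ∧ (x = 0 → y = z ∈ {0,1})}`. -/
def Req2P (a b c : D3) : Prop := (a = 0 ∨ a = 1) ∧ (a = 0 → b = c ∧ (b = 0 ∨ b = 1))

/-- `R⇒₂ = {(x,y,z) : x,y ∈ {0,1} ∧ (x = y = 0 → z = 0)}`. -/
def Rimp2P (a b c : D3) : Prop :=
  (a = 0 ∨ a = 1) ∧ (b = 0 ∨ b = 1) ∧ (a = 0 → b = 0 → c = 0)

/-- The relation `C₃^{𝔓'}` on `{0,1,2}⁴`. -/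
def C3P' (x y : Fin 4 → D3) : Prop :=
  C3P (x 0) (y 0) ∧ x 1 = y 2 ∧ x 2 = y 3 ∧ x 3 = y 1

/-- The relation `(R⁼₂)^{𝔓'}` on `{0,1,2}⁴`. -/
def Req2P' (x y z : Fin 4 → D3) : Prop :=
  B3P (x 1) (x 2) (x 3) ∧ B3P (y 1) (y 2) (y 3) ∧ B3P (z 1) (z 2) (z 3) ∧
  x 3 = 0 ∧ x 0 = x 2 ∧ le2P (y 3) (x 0) ∧ le2P (z 3) (x 0) ∧
  Rimp2P (x 0) (y 2) (z 2) ∧ Rimp2P (x 0) (z 2) (y 2)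

/-- The map `g` with `g(0) = (0,1,0,0)`, `g(1) = (1,0,1,0)`, `g(2) = (2,0,0,1)`. -/
def gMap : D3 → Fin 4 → D3 := ![![0,1,0,0], ![1,0,1,0], ![2,0,0,1]]

/-- The map `h`. -/
def hMap (x : Fin 4 → D3) : D3 :=
  if (x 1, x 2, x 3) = ((1 : D3), (0 : D3), (0 : D3)) ∨
     (x 1, x 2, x 3) = ((1 : D3), (0 : D3), (1 : D3)) then 0
  else if (x 1, x 2, x 3) = ((0 : D3), (1 : D3), (0 : D3)) ∨
          (x 1, x 2, x 3) = ((1 : D3), (1 : D3), (0 : D3)) then 1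
  else if (x 1, x 2, x 3) = ((0 : D3), (0 : D3), (1 : D3)) ∨
          (x 1, x 2, x 3) = ((0 : D3), (1 : D3), (1 : D3)) then 2
  else x 0

/-- `g` is a homomorphism from `𝔔 = ({0,1,2}; C₃, R⁼₂)` to `𝔓'`. -/
def IsHomQtoP' (g : D3 → Fin 4 → D3) : Prop :=
  (∀ a b : D3, C3P a b → C3P' (g a) (g b)) ∧
  (∀ a b c : D3, Req2P a b c → Req2P' (g a) (g b) (g c))

/-- `h` is a homomorphism from `𝔓'` to `𝔔`. -/
def IsHomP'toQ (h : (Fin 4 → D3) → D3) : Prop :=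
  (∀ x y : Fin 4 → D3, C3P' x y → C3P (h x) (h y)) ∧
  (∀ x y z : Fin 4 → D3, Req2P' x y z → Req2P (h x) (h y) (h z))

theorem g_hom_aux : IsHomQtoP' gMap := by
  constructor
  · unfold C3P C3P' C3P gMap
    decide
  · intro a b c h
    have hd : ∀ a b c d : D3, (B3P (gMap d 1) (gMap d 2) (gMap d 3)) ∧
        (Req2P a b c → gMap a 3 = 0 ∧ gMap a 0 = gMap a 2 ∧
          le2P (gMap b 3) (gMap a 0) ∧ le2P (gMap c 3) (gMap a 0)) ∧
        (Req2P a b c → Rimp2P (gMap a 0) (gMap b 2) (gMap c 2) ∧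
          Rimp2P (gMap a 0) (gMap c 2) (gMap b 2)) := by
      intro a b c d
      refine ⟨?_, ?_, ?_⟩
      · revert d; unfold B3P gMap; decide
      · revert a b c; unfold Req2P le2P gMap; decide
      · revert a b c; unfold Req2P Rimp2P gMap; decide
    obtain ⟨h1, h2, h3, h4⟩ := (hd a b c a).2.1 h
    exact ⟨(hd a b c a).1, (hd a b c b).1, (hd a b c c).1, h1, h2, h3, h4,
      (hd a b c a).2.2 h⟩

theorem h_hom_aux : IsHomP'toQ hMap := by
  constructor
  · rintro x y ⟨h0, h1, h2, h3⟩
    unfold hMap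
    rw [h1, h2, h3]
    revert h0
    generalize x 0 = a
    generalize y 0 = b
    generalize y 1 = c
    generalize y 2 = d
    generalize y 3 = e
    unfold C3P
    revert a b c d e
    decide
  · rintro x y z ⟨hx, hy, hz, hx3, hx0, hy3, hz3, hyz, hzy⟩
    simp only [B3P, le2P, Rimp2P, Req2P, hMap, Prod.mk.injEq] at *
    obtain ⟨hx1 | hx1, hx2 | hx2, -, hx⟩ := hx
    · simp_all
    · simp_all
    · obtain ⟨hy1 | hy1, hy2 | hy2, -, hy⟩ := hy <;>
      obtain ⟨hz1 | hz1, hz2 | hz2, -, hz⟩ := hz <;> simp_all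
    · simp_all

theorem stmt2 :
    IsHomQtoP' gMap ∧ IsHomP'toQ hMap ∧
    (∃ (g : D3 → Fin 4 → D3) (h : (Fin 4 → D3) → D3), IsHomQtoP' g ∧ IsHomP'toQ h) := by
  exact ⟨g_hom_aux, h_hom_aux, gMap, hMap, g_hom_aux, h_hom_aux⟩
end

section
/- There exist a minor-preserving map from Pol({0,1,2}; C_3, R^⇒_2) to Pol({0,1,2}; C_3, R^=_2) and a minor-preserving map from Pol({0,1,2}; C_3, R^=_2) to Pol({0,1,2}; C_3, R^⇒_2); i.e., these two polymorphism clones are minor equivalent. -/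
/-- `R⁼₂ = {(x,y,z) : x ∈ {0,1} ∧ (x = 0 → y = z ∈ {0,1})}`. -/
def Req2rel : Set (Fin 3 → D3) :=
  { t | (t 0 = 0 ∨ t 0 = 1) ∧ (t 0 = 0 → t 1 = t 2 ∧ (t 1 = 0 ∨ t 1 = 1)) }

/-- `R⇒₂ = {(x,y,z) : x,y ∈ {0,1} ∧ (x = y = 0 → z = 0)}`. -/
def Rimp2rel : Set (Fin 3 → D3) :=
  { t | (t 0 = 0 ∨ t 0 = 1) ∧ (t 1 = 0 ∨ t 1 = 1) ∧ (t 0 = 0 → t 1 = 0 → t 2 = 0) }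

/-- The minor `f_π` of an `n`-ary operation `f` along `π`. -/
def minor {n r : ℕ} (f : Op n) (π : Fin n → Fin r) : Op r :=
  fun x => f fun i => x (π i)

/-- `ξ` is a minor-preserving map from `C` to `D`: it preserves arities,
maps `C` into `D`, and commutes with taking minors. -/
def IsMinorHom (C D : ∀ n, Set (Op n)) (ξ : ∀ n, Op n → Op n) : Prop :=
  (∀ n, ∀ f ∈ C n, ξ n f ∈ D n) ∧
  (∀ (n r : ℕ) (f : Op n) (π : Fin n → Fin r), f ∈ C n → ξ r (minor f π) = minor (ξ n f) π)


def QQ {n : ℕ} (f : Op n) (y : Fin n → D3) (W : D3 → Prop) : Prop :=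
  ∃ x : Fin n → D3, (∀ i, x i = 0 ∨ x i = 1) ∧ f x = 0 ∧ ∀ i, x i = 0 → W (y i)

open Classical in
noncomputable def GH (p0 p1 p2 q0 q1 q2 : Prop) (v : D3) : D3 :=
  if p0 then 0 else if p1 then 1 else if p2 then 2 else
  if q0 then 1 else if q1 then 2 else if q2 then 0 else v

set_option maxHeartbeats 1000000 in
lemma GH.eqv {p0 p1 p2 q0 q1 q2 : Prop} (v : D3) (a : p0 → p1 → False) (b : p0 → p2 → False)
    (c : p1 → p2 → False) (d : q0 → q1 → p1) (e : q0 → q2 → p0) (g : q1 → q2 → p2) :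
    GH p2 p0 p1 q2 q0 q1 (v + 1) = GH p0 p1 p2 q0 q1 q2 v + 1 := by
  unfold GH
  by_cases h0 : p0 <;> by_cases h1 : p1 <;> by_cases h2 : p2 <;>
  by_cases k0 : q0 <;> by_cases k1 : q1 <;> by_cases k2 : q2 <;>
  first
  | exact (a h0 h1).elim
  | exact (b h0 h2).elim
  | exact (c h1 h2).elim
  | exact (h1 (d k0 k1)).elim
  | exact (h0 (e k0 k2)).elim
  | exact (h2 (g k1 k2)).elim
  | (simp only [h0, h1, h2, k0, k1, k2, if_true, if_false]; done)
  | (simp only [h0, h1, h2, k0, k1, k2, if_true, if_false]; rfl)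

noncomputable def GG {n : ℕ} (f : Op n) : Op n := fun y =>
  GH (QQ f y (fun w => w = 0)) (QQ f y (fun w => w = 1)) (QQ f y (fun w => w = 2))
    (QQ f y (fun w => w = 0 ∨ w = 1)) (QQ f y (fun w => w = 1 ∨ w = 2))
    (QQ f y (fun w => w = 2 ∨ w = 0)) (f y)

lemma c3_iff (t : Fin 2 → D3) : t ∈ C3rel ↔ t 1 = t 0 + 1 := by
  unfold C3rel
  simp only [Set.mem_setOf_eq]
  generalize t 0 = a
  generalize t 1 = b
  revert a b; decide

lemma pres_c3 {n : ℕ} (f : Op n) :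
    Preserves f C3rel ↔ ∀ y : Fin n → D3, f (fun i => y i + 1) = f y + 1 := by
  constructor
  · intro h y
    have := h (fun i => ![y i, y i + 1]) (fun i => by rw [c3_iff]; simp)
    rw [c3_iff] at this
    simpa using this
  · intro h t ht
    rw [c3_iff]
    simp only [c3_iff] at ht
    simp only [ht]
    exact h _

structure Good_s3 {n : ℕ} (f : Op n) : Prop where
  eqv : ∀ y : Fin n → D3, f (fun i => y i + 1) = f y + 1
  zero : f (fun _ => 0) = 0
  imp : ∀ x x' z : Fin n → D3, (∀ i, x i = 0 ∨ x i = 1) → (∀ i, x' i = 0 ∨ x' i = 1) →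
    (∀ i, x i = 0 → x' i = 0 → z i = 0) → f x = 0 → f x' = 0 → f z = 0

lemma zero_of {n : ℕ} {f : Op n} (h1 : ∀ y : Fin n → D3, f (fun i => y i + 1) = f y + 1)
    (h2 : ∀ x : Fin n → D3, (∀ i, x i = 0 ∨ x i = 1) → (f x = 0 ∨ f x = 1)) :
    f (fun _ => 0) = 0 := by
  have a := h2 (fun _ => 0) (by simp)
  have b := h2 (fun _ => 1) (by simp)
  have c := h1 (fun _ => 0)
  simp only [zero_add] at c
  rw [c] at b
  generalize f (fun _ => 0) = u at *
  clear c h1 h2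
  revert u; decide

lemma good_of_imp {n : ℕ} {f : Op n}
    (hf : f ∈ Pol ({⟨2, C3rel⟩, ⟨3, Rimp2rel⟩} : Set (Σ k : ℕ, Set (Fin k → D3))) n) :
    Good_s3 f := by
  have h1 := (pres_c3 f).1 (hf ⟨2, C3rel⟩ (by simp))
  have h2 : Preserves f Rimp2rel := hf ⟨3, Rimp2rel⟩ (by simp)
  have h3 : ∀ x x' z : Fin n → D3, (∀ i, x i = 0 ∨ x i = 1) → (∀ i, x' i = 0 ∨ x' i = 1) →
    (∀ i, x i = 0 → x' i = 0 → z i = 0) →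
      (f x = 0 ∨ f x = 1) ∧ (f x' = 0 ∨ f x' = 1) ∧ (f x = 0 → f x' = 0 → f z = 0) := by
    intro x x' z a b c
    exact h2 (fun i => ![x i, x' i, z i]) (fun i => ⟨a i, b i, c i⟩)
  exact ⟨h1, zero_of h1 fun x hx => (h3 x x (fun _ => 0) hx hx (by simp)).1,
    fun x x' z a b c => (h3 x x' z a b c).2.2⟩

lemma QQ.inter {n : ℕ} {f : Op n} (hf : Good_s3 f) {y : Fin n → D3} {W V : D3 → Prop}
    (h : QQ f y W) (h' : QQ f y V) : QQ f y (fun w => W w ∧ V w) := by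
  obtain ⟨x, a, b, c⟩ := h
  obtain ⟨x', a', b', c'⟩ := h'
  refine ⟨fun i => if x i = 0 ∧ x' i = 0 then 0 else 1, fun i => by grind, ?_, fun i => by grind⟩
  exact hf.imp x x' _ a a' (fun i h h' => by simp [h, h']) b b'

lemma QQ.mono {n : ℕ} {f : Op n} {y : Fin n → D3} {W V : D3 → Prop}
    (h : QQ f y W) (h' : ∀ w, W w → V w) : QQ f y V := by
  obtain ⟨x, a, b, c⟩ := h
  exact ⟨x, a, b, fun i hi => h' _ (c i hi)⟩

lemma QQ.bot {n : ℕ} {f : Op n} (hf : Good_s3 f) {y : Fin n → D3} {W : D3 → Prop}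
    (h : QQ f y W) (h' : ∀ w, ¬ W w) : False := by
  obtain ⟨x, a, b, c⟩ := h
  have : x = fun _ => 1 := by
    funext i
    exact (a i).resolve_left fun h => h' _ (c i h)
  have e := hf.eqv (fun _ => 0)
  simp only [zero_add, hf.zero] at e
  rw [this, e] at b
  exact absurd b (by decide)

lemma QQ.shift {n : ℕ} {f : Op n} {y : Fin n → D3} {W V : D3 → Prop}
    (h : ∀ w, V (w + 1) ↔ W w) : QQ f (fun i => y i + 1) V ↔ QQ f y W := by
  unfold QQ
  simp only [h]

lemma QQ.minor {n r : ℕ} {f : Op n} (hf : Good_s3 f) (π : Fin n → Fin r) (y : Fin r → D3)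
    (W : D3 → Prop) : QQ (minor f π) y W ↔ QQ f (fun i => y (π i)) W := by
  classical
  constructor
  · rintro ⟨x, a, b, c⟩
    exact ⟨fun i => x (π i), fun i => a _, b, fun i => c _⟩
  · rintro ⟨x, a, b, c⟩
    refine ⟨fun j => if ∃ i, π i = j ∧ x i = 0 then 0 else 1, fun j => by
      by_cases h : ∃ i, π i = j ∧ x i = 0 <;> simp [h], ?_, fun j hj => ?_⟩
    swap
    · by_cases h : ∃ i, π i = j ∧ x i = 0
      · obtain ⟨i, rfl, h⟩ := h
        exact c i h
      · simp [h] at hj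
    exact hf.imp x x _ a a (fun i h _ => if_pos ⟨i, rfl, h⟩) b b

lemma GG.minor {n r : ℕ} {f : Op n} (hf : Good_s3 f) (π : Fin n → Fin r) :
    GG (minor f π) = _root_.minor (GG f) π := by
  funext y
  change GH _ _ _ _ _ _ _ = GH _ _ _ _ _ _ _
  simp only [QQ.minor hf π y]
  rfl

lemma GG.eqv {n : ℕ} {f : Op n} (hf : Good_s3 f) (y : Fin n → D3) :
    GG f (fun i => y i + 1) = GG f y + 1 := by
  have s0 : QQ f (fun i => y i + 1) (fun w => w = 0) ↔ QQ f y (fun w => w = 2) :=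
    QQ.shift (by decide)
  have s1 : QQ f (fun i => y i + 1) (fun w => w = 1) ↔ QQ f y (fun w => w = 0) :=
    QQ.shift (by decide)
  have s2 : QQ f (fun i => y i + 1) (fun w => w = 2) ↔ QQ f y (fun w => w = 1) :=
    QQ.shift (by decide)
  have t0 : QQ f (fun i => y i + 1) (fun w => w = 0 ∨ w = 1) ↔ QQ f y (fun w => w = 2 ∨ w = 0) :=
    QQ.shift (by decide)
  have t1 : QQ f (fun i => y i + 1) (fun w => w = 1 ∨ w = 2) ↔ QQ f y (fun w => w = 0 ∨ w = 1) :=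
    QQ.shift (by decide)
  have t2 : QQ f (fun i => y i + 1) (fun w => w = 2 ∨ w = 0) ↔ QQ f y (fun w => w = 1 ∨ w = 2) :=
    QQ.shift (by decide)
  have a : QQ f y (fun w => w = 0) → QQ f y (fun w => w = 1) → False :=
    fun h h' => (h.inter hf h').bot hf (by decide)
  have b : QQ f y (fun w => w = 0) → QQ f y (fun w => w = 2) → False :=
    fun h h' => (h.inter hf h').bot hf (by decide)
  have c : QQ f y (fun w => w = 1) → QQ f y (fun w => w = 2) → False :=
    fun h h' => (h.inter hf h').bot hf (by decide)
  have d : QQ f y (fun w => w = 0 ∨ w = 1) → QQ f y (fun w => w = 1 ∨ w = 2) →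
      QQ f y (fun w => w = 1) :=
    fun h h' => (h.inter hf h').mono (by decide)
  have e : QQ f y (fun w => w = 0 ∨ w = 1) → QQ f y (fun w => w = 2 ∨ w = 0) →
      QQ f y (fun w => w = 0) :=
    fun h h' => (h.inter hf h').mono (by decide)
  have g : QQ f y (fun w => w = 1 ∨ w = 2) → QQ f y (fun w => w = 2 ∨ w = 0) →
      QQ f y (fun w => w = 2) :=
    fun h h' => (h.inter hf h').mono (by decide)
  unfold GG
  rw [s0, s1, s2, t0, t1, t2, hf.eqv]
  exact GH.eqv _ a b c d e g

lemma GG.bool {n : ℕ} {f : Op n} (hf : Good_s3 f) (y : Fin n → D3)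
    (h : QQ f y (fun w => w = 0 ∨ w = 1)) :
    (GG f y = 0 ∨ GG f y = 1) ∧ (GG f y = 0 → QQ f y (fun w => w = 0)) := by
  have a : ¬ QQ f y (fun w => w = 2) := fun h' => (h.inter hf h').bot hf (by decide)
  simp only [GG, GH, h, a, if_true, if_false]
  split_ifs <;> simp_all

lemma GG.mem {n : ℕ} {f : Op n} (hf : Good_s3 f) :
    GG f ∈ Pol ({⟨2, C3rel⟩, ⟨3, Req2rel⟩} : Set (Σ k : ℕ, Set (Fin k → D3))) n := by
  rintro R (rfl | rfl)
  · exact (pres_c3 _).2 (GG.eqv hf)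
  intro t ht
  have hx : ∀ i, t i 0 = 0 ∨ t i 0 = 1 := fun i => (ht i).1
  have hb := GG.bool hf (fun i => t i 0) ⟨fun _ => 0, by simp, hf.zero, fun i _ => hx i⟩
  refine ⟨hb.1, fun h0 => ?_⟩
  obtain ⟨x, a, b, c⟩ := hb.2 h0
  have hx0 : f (fun i => t i 0) = 0 := hf.imp x x _ a a (fun i h _ => c i h) b b
  have key : ∀ y z : Fin n → D3, (∀ i, t i 0 = 0 → y i = z i) → ∀ W, QQ f y W → QQ f z W := by
    rintro y z h W ⟨x', a', b', c'⟩
    refine ⟨fun i => if t i 0 = 0 ∧ x' i = 0 then 0 else 1, fun i => by grind, ?_,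
      fun i => by grind⟩
    exact hf.imp _ x' _ hx a' (fun i h h' => by simp [h, h']) hx0 b'
  have e : ∀ i, t i 0 = 0 → t i 1 = t i 2 := fun i h => ((ht i).2 h).1
  have key2 : ∀ W, QQ f (fun i => t i 1) W ↔ QQ f (fun i => t i 2) W :=
    fun W => ⟨key _ _ e W, key _ _ (fun i h => (e i h).symm) W⟩
  have hP : QQ f (fun i => t i 1) (fun w => w = 0 ∨ w = 1) :=
    ⟨_, hx, hx0, fun i h => ((ht i).2 h).2⟩
  refine ⟨?_, (GG.bool hf _ hP).1⟩
  have hP' := (key2 _).1 hP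
  change GH _ _ _ _ _ _ _ = GH _ _ _ _ _ _ _
  simp only [key2]
  simp only [GH, hP', if_true]

lemma imp_of_eq {n : ℕ} {f : Op n}
    (hf : f ∈ Pol ({⟨2, C3rel⟩, ⟨3, Req2rel⟩} : Set (Σ k : ℕ, Set (Fin k → D3))) n) :
    f ∈ Pol ({⟨2, C3rel⟩, ⟨3, Rimp2rel⟩} : Set (Σ k : ℕ, Set (Fin k → D3))) n := by
  have h1 := (pres_c3 f).1 (hf ⟨2, C3rel⟩ (by simp))
  have h2 : Preserves f Req2rel := hf ⟨3, Req2rel⟩ (by simp)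
  have h3 : ∀ x y z : Fin n → D3, (∀ i, x i = 0 ∨ x i = 1) →
      (∀ i, x i = 0 → y i = z i ∧ (y i = 0 ∨ y i = 1)) →
      (f x = 0 ∨ f x = 1) ∧ (f x = 0 → f y = f z ∧ (f y = 0 ∨ f y = 1)) := by
    intro x y z a b
    exact h2 (fun i => ![x i, y i, z i]) (fun i => ⟨a i, b i⟩)
  have hz : f (fun _ => 0) = 0 :=
    zero_of h1 fun x hx => (h3 x (fun _ => 0) (fun _ => 0) hx (by simp)).1
  rintro R (rfl | rfl)
  · exact (pres_c3 _).2 h1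
  intro t ht
  have hx : ∀ i, t i 0 = 0 ∨ t i 0 = 1 := fun i => (ht i).1
  have hy : ∀ i, t i 1 = 0 ∨ t i 1 = 1 := fun i => (ht i).2.1
  refine ⟨(h3 _ (fun _ => 0) (fun _ => 0) hx (by simp)).1,
    (h3 _ (fun _ => 0) (fun _ => 0) hy (by simp)).1, fun p q => ?_⟩
  -- u is the union of the two supports, agreeing with the second vector off the first support
  have hu : f (fun i => if t i 0 = 0 ∧ t i 1 = 0 then 0 else 1) = 0 := by
    rw [← ((h3 _ (fun i => t i 1) (fun i => if t i 0 = 0 ∧ t i 1 = 0 then 0 else 1) hx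
      (fun i h => by have := hy i; grind)).2 p).1]
    exact q
  show f (fun i => t i 2) = 0
  rw [← ((h3 _ (fun _ => 0) (fun i => t i 2) (fun i => by grind) (fun i h => by
    have := (ht i).2.2; grind)).2 hu).1]
  exact hz

/-- `Pol({0,1,2}; C₃, R⇒₂)` and `Pol({0,1,2}; C₃, R⁼₂)` are minor equivalent. -/
theorem stmt3 :
    (∃ ξ, IsMinorHom
      (Pol ({⟨2, C3rel⟩, ⟨3, Rimp2rel⟩} : Set (Σ k : ℕ, Set (Fin k → D3))))
      (Pol ({⟨2, C3rel⟩, ⟨3, Req2rel⟩} : Set (Σ k : ℕ, Set (Fin k → D3)))) ξ) ∧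
    (∃ ξ, IsMinorHom
      (Pol ({⟨2, C3rel⟩, ⟨3, Req2rel⟩} : Set (Σ k : ℕ, Set (Fin k → D3))))
      (Pol ({⟨2, C3rel⟩, ⟨3, Rimp2rel⟩} : Set (Σ k : ℕ, Set (Fin k → D3)))) ξ) := by
  exact ⟨⟨fun _ f => GG f, fun n f hf => GG.mem (good_of_imp hf),
      fun n r f π hf => GG.minor (good_of_imp hf) π⟩,
    ⟨fun _ f => f, fun n f hf => imp_of_eq hf, fun n r f π hf => rfl⟩⟩
end

section
/- For all m,k ≥ 1 and all S_1,…,S_m ⊆ {1,…,k} with S_1 ∪ … ∪ S_m = {1,…,k}, the map g with g(0)=(0,1,0,0), g(1)=(1,0,1,0), g(2)=(2,0,0,1) maps C_3 into C_3', W into W', and R_{S_1,…,S_m} into R'_{S_1,…,S_m} (componentwise on tuples), and the map h with h(x_0,x_1,x_2,x_3)=0 if (x_1,x_2,x_3)∈{(1,0,0),(1,0,1)}, =1 if (x_1,x_2,x_3)∈{(0,1,0),(1,1,0)}, =2 if (x_1,x_2,x_3)∈{(0,0,1),(0,1,1)}, =x_0 otherwise, maps C_3' into C_3, W' into W, and R'_{S_1,…,S_m}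 into R_{S_1,…,S_m}. Hence the structure ({0,1,2}; C_3, W, (R_{S_1,…,S_m})) is homomorphically equivalent to the structure ({0,1,2}^4; C_3', W', (R'_{S_1,…,S_m})). -/
/-- `W = {(x,y) : x ∈ {0,1} ∧ (x = 0 → y ∈ {0,1})}`. -/
def WP (a b : D3) : Prop := (a = 0 ∨ a = 1) ∧ (a = 0 → (b = 0 ∨ b = 1))

/-- The relation `R_{S₁,…,S_m} ⊆ {0,1,2}^{m+k}`, with the tuple split as
`x : Fin m → D3` and `y : Fin k → D3`. -/
def RSP {m k : ℕ} (S : Fin m → Set (Fin k)) (x : Fin m → D3) (y : Fin k → D3) : Prop :=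
  (∀ i, x i = 0 ∨ x i = 1) ∧
  (∀ i, x i = 0 → ∀ j ∈ S i, (y j = 0 ∨ y j = 1)) ∧
  ¬((∀ i, x i = 0) ∧ (∀ j, y j = 0))

/-- The relation `W'` on `{0,1,2}⁴`. -/
def WP' (x y : Fin 4 → D3) : Prop :=
  B3P (x 1) (x 2) (x 3) ∧ B3P (y 1) (y 2) (y 3) ∧ x 3 = 0 ∧ x 0 = x 2 ∧ le2P (y 3) (x 0)

/-- The relation `R'_{S₁,…,S_m}` on `{0,1,2}⁴`. -/
def RSP' {m k : ℕ} (S : Fin m → Set (Fin k))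
    (x : Fin m → Fin 4 → D3) (y : Fin k → Fin 4 → D3) : Prop :=
  ((∀ i, x i 2 = 0 ∨ x i 2 = 1) ∧ (∀ j, y j 2 = 0 ∨ y j 2 = 1) ∧
    ¬((∀ i, x i 2 = 0) ∧ (∀ j, y j 2 = 0))) ∧
  (∀ i, B3P (x i 1) (x i 2) (x i 3) ∧ x i 3 = 0 ∧ x i 0 = x i 2 ∧
    ∀ j ∈ S i, le2P (y j 3) (x i 0) ∧ B3P (y j 1) (y j 2) (y j 3))

/-- `g` is a homomorphism from `({0,1,2}; C₃, W, (R_{S₁,…,S_m}))` to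
`({0,1,2}⁴; C₃', W', (R'_{S₁,…,S_m}))`. -/
def IsHomForward (g : D3 → Fin 4 → D3) : Prop :=
  (∀ a b : D3, C3P a b → C3P' (g a) (g b)) ∧
  (∀ a b : D3, WP a b → WP' (g a) (g b)) ∧
  (∀ (m k : ℕ), 1 ≤ m → 1 ≤ k → ∀ S : Fin m → Set (Fin k), (∀ j, ∃ i, j ∈ S i) →
    ∀ (x : Fin m → D3) (y : Fin k → D3), RSP S x y →
      RSP' S (fun i => g (x i)) (fun j => g (y j)))

/-- `h` is a homomorphism from `({0,1,2}⁴; C₃', W', (R'_{S₁,…,S_m}))` to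
`({0,1,2}; C₃, W, (R_{S₁,…,S_m}))`. -/
def IsHomBackward (h : (Fin 4 → D3) → D3) : Prop :=
  (∀ x y : Fin 4 → D3, C3P' x y → C3P (h x) (h y)) ∧
  (∀ x y : Fin 4 → D3, WP' x y → WP (h x) (h y)) ∧
  (∀ (m k : ℕ), 1 ≤ m → 1 ≤ k → ∀ S : Fin m → Set (Fin k), (∀ j, ∃ i, j ∈ S i) →
    ∀ (x : Fin m → Fin 4 → D3) (y : Fin k → Fin 4 → D3), RSP' S x y →
      RSP S (fun i => h (x i)) (fun j => h (y j)))

theorem g_C3 : ∀ a b : D3, C3P a b → C3P' (gMap a) (gMap b) := by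
  unfold C3P' C3P; decide

theorem g_W : ∀ a b : D3, WP a b → WP' (gMap a) (gMap b) := by
  unfold WP WP' B3P le2P; decide

theorem g_two : ∀ a : D3, (gMap a 2 = 0 ∨ gMap a 2 = 1) ∧ (gMap a 2 = 0 → a ≠ 1) := by
  decide

theorem g_isHom : IsHomForward gMap := by
  refine ⟨g_C3, g_W, ?_⟩
  intro m k hm hk S hS x y ⟨h1, h2, h3⟩
  have hWi : ∀ i j, j ∈ S i → WP' (gMap (x i)) (gMap (y j)) := fun i j hj =>
    g_W _ _ ⟨h1 i, fun h => h2 i h j hj⟩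
  refine ⟨⟨fun i => (g_two _).1, fun j => (g_two _).1, ?_⟩, ?_⟩
  · rintro ⟨ha, hb⟩
    have hx : ∀ i, x i = 0 := fun i => (h1 i).resolve_right ((g_two _).2 (ha i))
    refine h3 ⟨hx, fun j => ?_⟩
    obtain ⟨i, hi⟩ := hS j
    exact (h2 i (hx i) j hi).resolve_right ((g_two _).2 (hb j))
  · intro i
    have h0 : WP' (gMap (x i)) (gMap 0) := g_W _ _ ⟨h1 i, fun _ => Or.inl rfl⟩
    exact ⟨h0.1, h0.2.2.1, h0.2.2.2.1, fun j hj =>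
      ⟨(hWi i j hj).2.2.2.2, (hWi i j hj).2.1⟩⟩

/-- `h` written as a function of the four coordinates. -/
def hAux (a b c d : D3) : D3 := hMap ![a, b, c, d]

theorem h_eq (x : Fin 4 → D3) : hMap x = hAux (x 0) (x 1) (x 2) (x 3) := rfl

theorem h_C3 : ∀ x y : Fin 4 → D3, C3P' x y → C3P (hMap x) (hMap y) := by
  intro x y ⟨h0, h1, h2, h3⟩
  rw [h_eq, h_eq, ← h1, ← h2, ← h3]
  have key : ∀ a a' b c d : D3, C3P a a' → C3P (hAux a b c d) (hAux a' d b c) := by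
    unfold C3P; decide
  exact key _ _ _ _ _ h0

theorem h_X (x : Fin 4 → D3) : B3P (x 1) (x 2) (x 3) → x 3 = 0 →
    (hMap x = 0 ∨ hMap x = 1) ∧ (hMap x = 0 → x 2 = 0) := by
  rw [h_eq]
  have key : ∀ a b c d : D3, B3P b c d → d = 0 →
      (hAux a b c d = 0 ∨ hAux a b c d = 1) ∧ (hAux a b c d = 0 → c = 0) := by
    unfold B3P; decide
  exact key _ _ _ _

theorem h_Y (x : Fin 4 → D3) (a : D3) : B3P (x 1) (x 2) (x 3) → le2P (x 3) a → a = 0 →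
    (hMap x = 0 ∨ hMap x = 1) ∧ (hMap x = 0 → x 2 = 0) := by
  intro hb hl ha
  refine h_X x hb ?_
  subst ha
  revert hl
  generalize x 3 = d
  revert d
  unfold le2P; decide

theorem h_isHom : IsHomBackward hMap := by
  refine ⟨h_C3, ?_, ?_⟩
  · intro x y ⟨hx, hy, hx3, hx0, hl⟩
    exact ⟨(h_X x hx hx3).1, fun h => (h_Y y _ hy hl (hx0.trans ((h_X x hx hx3).2 h))).1⟩
  · intro m k hm hk S hS x y ⟨⟨_, _, h3⟩, h4⟩
    have hz : ∀ i, hMap (x i) = 0 → x i 2 = 0 := fun i => (h_X _ (h4 i).1 (h4 i).2.1).2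
    have hY : ∀ i, hMap (x i) = 0 → ∀ j ∈ S i,
        (hMap (y j) = 0 ∨ hMap (y j) = 1) ∧ (hMap (y j) = 0 → y j 2 = 0) := by
      intro i h j hj
      have := (h4 i).2.2.2 j hj
      exact h_Y _ _ this.2 this.1 ((h4 i).2.2.1.trans (hz i h))
    refine ⟨fun i => (h_X _ (h4 i).1 (h4 i).2.1).1, fun i h j hj => (hY i h j hj).1, ?_⟩
    rintro ⟨ha, hb⟩
    refine h3 ⟨fun i => hz i (ha i), fun j => ?_⟩
    obtain ⟨i, hi⟩ := hS j
    exact (hY i (ha i) j hi).2 (hb j)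

theorem stmt4 :
    IsHomForward gMap ∧ IsHomBackward hMap ∧
    (∃ (g : D3 → Fin 4 → D3) (h : (Fin 4 → D3) → D3), IsHomForward g ∧ IsHomBackward h) := by
  exact ⟨g_isHom, h_isHom, gMap, hMap, g_isHom, h_isHom⟩
end
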